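/- Let H=(V_H,E_H) be a fixed graph with at least one edge, P a strict partial order on E_H, let ψ be a label multiplicity distribution with mean r and second moment r₂ that is almost surely bounded (there exists C with P[Q≤C]=1), 0<δ<1, and 𝒢 a sample from Γ_{[n]}(ψ). Let N_δ be the number of pairs (φ,τ) where φ:V_H→[n] is injective and τ assigns to each edge e∈E_H an index τ(e)∈{1,…,l_{φ(e)}} of one of the labels of edge φ(e), such that the selected labels all lie within an interval of length δ and satisfy the order P under φ. Then Var[N_δ] ≤ δ^{2|E_H|}·r^{2|E_H|}·(1 + |E_H|(1−δ)/δ)²·Σ ((δr₂+r−δr)/(δr²))^{k(φ₁,φ₂)}, where the sum ranges over ordered pairs of injective maps φ₁,φ₂:V_H→[n] whose edge images share at least one edge, and k(φ₁,φ₂) is the number of edges of K_n shared by the two images. -/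

import Mathlib

open MeasureTheory ProbabilityTheory Filter Set
open scoped ENNReal NNReal Topology

noncomputable section

namespace RTG

/-- A temporal graph on vertex type `V`, given by the finite set of real time labels
attached to each potential edge (unordered pair of vertices). -/
abbrev TGraph (V : Type*) := Sym2 V → Finset ℝ

/-- `P` is a strict partial order supported on the set `s`. -/
def StrictPartialOrderOn {α : Type*} (s : Set α) (P : α → α → Prop) : Prop :=
  (∀ a, ¬ P a a) ∧ (∀ a b c, P a b → P b c → P a c) ∧ ∀ a b, P a b → a ∈ s ∧ b ∈ s

/-- The temporal graph `Λ` contains `(H, P)` as a `δ`-temporal motif. -/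
def Contains {VH V : Type*} (H : SimpleGraph VH) (P : Sym2 VH → Sym2 VH → Prop)
    (Λ : TGraph V) (δ : ℝ) : Prop :=
  ∃ Φ : VH → V, Function.Injective Φ ∧
    ∃ lab : Sym2 VH → ℝ,
      (∀ e ∈ H.edgeSet, lab e ∈ Λ (Sym2.map Φ e)) ∧
      (∀ e f, P e f → lab e < lab f) ∧
      (∀ e ∈ H.edgeSet, ∀ f ∈ H.edgeSet, lab e - lab f < δ)

/-- The sparsity `ρ_H` of a graph `H`: the minimum over subgraphs with at least two
edges of `|V_I| / (|E_I| - 1)`. -/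
def sparsity {VH : Type*} (H : SimpleGraph VH) : ℝ :=
  sInf {x : ℝ | ∃ I : H.Subgraph, 2 ≤ I.edgeSet.ncard ∧
    x = (I.verts.ncard : ℝ) / ((I.edgeSet.ncard : ℝ) - 1)}

/-- The space of label data on a single edge: a number `k` of labels together with the
tuple of `k` label values (indexed in order of sampling). -/
abbrev LabelSpace := Σ k : ℕ, Fin k → ℝ

/-- The uniform distribution on `(0, 1]`. -/
def unif01 : Measure ℝ := volume.restrict (Set.Ioc 0 1)

/-- The uniform distribution on `{1, …, T}` (as a measure on `ℝ`). -/
def unifDisc (T : ℕ) : Measure ℝ :=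
  (T : ℝ≥0∞)⁻¹ • ∑ k ∈ Finset.Icc 1 T, Measure.dirac (k : ℝ)

/-- The distribution of the label data of a single edge: the number of labels is drawn
according to `ψ` and, independently, each label value is drawn according to `ν`. -/
def edgeMeasure (ν : Measure ℝ) (ψ : Measure ℕ) : Measure LabelSpace :=
  Measure.sum fun k => ψ {k} • (Measure.pi fun _ : Fin k => ν).map (Sigma.mk k)

/-- The doubly random temporal graph model on vertex set `V` with label value
distribution `ν` and label multiplicity distribution `ψ`: all edges receive independent
identically distributed label data. -/
def model (V : Type*) [Fintype V] [DecidableEq V] (ν : Measure ℝ) (ψ : Measure ℕ) :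
    Measure (Sym2 V → LabelSpace) :=
  Measure.pi fun _ : Sym2 V => edgeMeasure ν ψ

/-- The continuous doubly random temporal graph `Γ_V(ψ)`. -/
abbrev contModel (V : Type*) [Fintype V] [DecidableEq V] (ψ : Measure ℕ) :
    Measure (Sym2 V → LabelSpace) := model V unif01 ψ

/-- The discrete doubly random temporal graph `Γ_V(ψ, T)`. -/
abbrev discModel (V : Type*) [Fintype V] [DecidableEq V] (ψ : Measure ℕ) (T : ℕ) :
    Measure (Sym2 V → LabelSpace) := model V (unifDisc T) ψ

/-- The temporal graph determined by a sample `ω` of the model: each non-loop edge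
carries the sampled set of labels. -/
def toTGraph {V : Type*} [DecidableEq V] (ω : Sym2 V → LabelSpace) : TGraph V :=
  fun e => if e.IsDiag then ∅ else Finset.image (ω e).2 Finset.univ

/-- The `T`-discretization of a temporal graph: each label `l` is replaced by `⌈T·l⌉`. -/
def discretize {V : Type*} (T : ℕ) (Λ : TGraph V) : TGraph V :=
  fun e => (Λ e).image fun l => ((⌈(T : ℝ) * l⌉ : ℤ) : ℝ)

/-- `ψ` is a label multiplicity distribution: a probability distribution on `ℕ` with
positive finite mean and finite second moment. -/
def IsLMD (ψ : Measure ℕ) : Prop :=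
  IsProbabilityMeasure ψ ∧ Integrable (fun k : ℕ => (k : ℝ)) ψ ∧
    Integrable (fun k : ℕ => (k : ℝ) ^ 2) ψ ∧ 0 < ∫ k, (k : ℝ) ∂ψ

/-- The mean `r` of a label multiplicity distribution. -/
def lmdMean (ψ : Measure ℕ) : ℝ := ∫ k, (k : ℝ) ∂ψ

/-- The second moment `r₂` of a label multiplicity distribution. -/
def lmdSq (ψ : Measure ℕ) : ℝ := ∫ k, (k : ℝ) ^ 2 ∂ψ

/-- `q = P[Q > 0]` for a label multiplicity distribution. -/
def lmdPos (ψ : Measure ℕ) : ℝ := (ψ {k | 0 < k}).toReal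

/-- `v` is reachable from the set `S` by time `t` in the temporal graph `Λ`. -/
def ReachBy {V : Type*} (Λ : TGraph V) (S : Set V) (t : ℝ) (v : V) : Prop :=
  v ∈ S ∨ ∃ (k : ℕ) (f : ℕ → V) (ts : ℕ → ℝ), 0 < k ∧ f 0 ∈ S ∧ f k = v ∧
    (∀ i < k, ts i ∈ Λ s(f i, f (i + 1))) ∧
    (∀ i j, i < j → j < k → ts i < ts j) ∧ ts (k - 1) ≤ t

/-- The reachability ball `B_Λ(S, t)`. -/
def ball {V : Type*} (Λ : TGraph V) (S : Set V) (t : ℝ) : Set V := {v | ReachBy Λ S t v}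

/-- The doubling time of the set `S` in `Λ` (with value `∞` if the reachability ball
never doubles in size). -/
def doubleTime {V : Type*} (Λ : TGraph V) (S : Set V) : ℝ≥0∞ :=
  ⨅ (t : ℝ) (_ : 0 ≤ t ∧ 2 * S.ncard ≤ (ball Λ S t).ncard), ENNReal.ofReal t

/-- The doubling time of the temporal graph `Λ`: the maximum doubling time over all
nonempty vertex sets of size at most half the number of vertices. -/
def doubleAll {V : Type*} [Fintype V] (Λ : TGraph V) : ℝ≥0∞ :=
  ⨆ (S : Set V) (_ : S.Nonempty ∧ 2 * S.ncard ≤ Fintype.card V), doubleTime Λ S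

/-- `Double⁻`: the maximum doubling time over nonempty sets of size at most `n/4`. -/
def doubleSmall {V : Type*} [Fintype V] (Λ : TGraph V) : ℝ≥0∞ :=
  ⨆ (S : Set V) (_ : S.Nonempty ∧ 4 * S.ncard ≤ Fintype.card V), doubleTime Λ S

/-- `Double⁺`: the maximum doubling time over sets of size in `(n/4, n/2]`. -/
def doubleLarge {V : Type*} [Fintype V] (Λ : TGraph V) : ℝ≥0∞ :=
  ⨆ (S : Set V) (_ : Fintype.card V < 4 * S.ncard ∧ 2 * S.ncard ≤ Fintype.card V),
    doubleTime Λ S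

/-- The partial reversal `ℛ(Λ, t)`: every label `l < t` is replaced by `t - l`. -/
def reverse {V : Type*} (Λ : TGraph V) (t : ℝ) : TGraph V :=
  fun e => (Λ e).image fun l => if l < t then t - l else l

/-- The rank of a time `x` among all the labels of the sample `ω`: the number of labels
(on genuine, non-loop, edges) that are at most `x`. -/
def rank {V : Type*} [Fintype V] [DecidableEq V] (ω : Sym2 V → LabelSpace) (x : ℝ) : ℕ :=
  ∑ e ∈ Finset.univ.filter (fun e : Sym2 V => ¬ e.IsDiag),
    Nat.card {i : Fin (ω e).1 // (ω e).2 i ≤ x}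

/-- The order discretization `𝒢^O` of the sample `ω`: each label is replaced by its rank
among all labels. -/
def orderDisc {V : Type*} [Fintype V] [DecidableEq V] (ω : Sym2 V → LabelSpace) :
    TGraph V :=
  fun e => if e.IsDiag then ∅
    else Finset.image (fun i => (rank ω ((ω e).2 i) : ℝ)) Finset.univ


/-- The value of the `j`-th sampled label (0-indexed) on the edge `f` in the sample `ω`
(junk value `0` if there are not that many labels). -/
def labVal {V : Type*} (ω : Sym2 V → LabelSpace) (f : Sym2 V) (j : ℕ) : ℝ :=
  if h : j < (ω f).1 then (ω f).2 ⟨j, h⟩ else 0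

/-- The set of occurrences of `(H, P)` as a `δ`-temporal motif in the sample `ω`:
pairs of an injective vertex map `φ` and a choice `τ` of a label index for each edge,
such that the selected labels lie within an interval of length `δ` and realize `P`. -/
def motifOcc {VH : Type*} {n : ℕ} (H : SimpleGraph VH) (P : Sym2 VH → Sym2 VH → Prop)
    (δ : ℝ) (ω : Sym2 (Fin n) → LabelSpace) : Set ((VH → Fin n) × (Sym2 VH → ℕ)) :=
  {p | Function.Injective p.1 ∧ (∀ e, e ∉ H.edgeSet → p.2 e = 0) ∧
    (∀ e ∈ H.edgeSet, p.2 e < (ω (Sym2.map p.1 e)).1) ∧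
    (∀ e ∈ H.edgeSet, ∀ f ∈ H.edgeSet,
      labVal ω (Sym2.map p.1 e) (p.2 e) - labVal ω (Sym2.map p.1 f) (p.2 f) ≤ δ) ∧
    (∀ e f, P e f →
      labVal ω (Sym2.map p.1 e) (p.2 e) < labVal ω (Sym2.map p.1 f) (p.2 f))}

/-- The number of edges of `K_n` shared by the images of `H` under the two maps. -/
def sharedEdges {VH : Type*} {n : ℕ} (H : SimpleGraph VH)
    (φ₁ φ₂ : VH → Fin n) : Set (Sym2 (Fin n)) :=
  (Sym2.map φ₁ '' H.edgeSet) ∩ (Sym2.map φ₂ '' H.edgeSet)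

/-! ### Helper lemmas -/

instance unif01_prob : IsProbabilityMeasure unif01 :=
  ⟨by simp [unif01]⟩

lemma unif01_Icc_le (x δ : ℝ) : unif01 (Set.Icc x (x + δ)) ≤ ENNReal.ofReal δ := by
  unfold unif01
  calc _ ≤ volume (Set.Icc x (x + δ)) := Measure.restrict_apply_le _ _
    _ = _ := by simp

lemma unif01_Ioi_le (δ : ℝ) : unif01 (Set.Ioi (1 - δ)) ≤ ENNReal.ofReal δ := by
  unfold unif01
  rw [Measure.restrict_apply measurableSet_Ioi]
  calc _ ≤ volume (Set.Ioc (1 - δ) 1) := measure_mono (by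
        intro y hy; exact ⟨hy.1, hy.2.2⟩)
    _ = _ := by simp

lemma unif01_Iic_le (δ : ℝ) : unif01 (Set.Iic (1 - δ)) ≤ ENNReal.ofReal (1 - δ) := by
  unfold unif01
  rw [Measure.restrict_apply measurableSet_Iic]
  calc _ ≤ volume (Set.Ioc 0 (1 - δ)) := measure_mono (by
        intro y hy; exact ⟨hy.2.1, hy.1⟩)
    _ = _ := by simp

lemma fit_slice (δ : ℝ) (m : ℕ) (i : Fin (m + 1)) :
    (Measure.pi fun _ : Fin (m + 1) => unif01)
      {u | u i ≤ 1 - δ ∧ ∀ j, u (i.succAbove j) ∈ Set.Icc (u i) (u i + δ)}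
      ≤ ENNReal.ofReal (1 - δ) * ENNReal.ofReal δ ^ m := by
  have hmp := measurePreserving_piFinSuccAbove (fun _ : Fin (m + 1) => unif01) i
  set B : Set (ℝ × (Fin m → ℝ)) :=
    {p | p.1 ≤ 1 - δ ∧ ∀ j, p.2 j ∈ Set.Icc p.1 (p.1 + δ)} with hB
  have hBm : MeasurableSet B := by
    have : B = {p | p.1 ≤ 1 - δ} ∩ ⋂ j, ({p | p.1 ≤ p.2 j} ∩ {p | p.2 j ≤ p.1 + δ}) := by
      ext p; simp [hB]
    rw [this]
    refine (measurableSet_le (by fun_prop) (by fun_prop)).inter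
      (MeasurableSet.iInter fun j => ?_)
    exact (measurableSet_le (by fun_prop) (by fun_prop)).inter
      (measurableSet_le (by fun_prop) (by fun_prop))
  have h1 := hmp.measure_preimage hBm.nullMeasurableSet
  have h2 : (MeasurableEquiv.piFinSuccAbove (fun _ : Fin (m + 1) => ℝ) i) ⁻¹' B =
      {u | u i ≤ 1 - δ ∧ ∀ j, u (i.succAbove j) ∈ Set.Icc (u i) (u i + δ)} := by
    ext u
    simp [hB, MeasurableEquiv.piFinSuccAbove, Fin.insertNthEquiv, Fin.removeNth]
  rw [← h2, h1, Measure.prod_apply hBm]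
  calc _ ≤ ∫⁻ x, (Set.Iic (1 - δ)).indicator (fun _ => ENNReal.ofReal δ ^ m) x ∂unif01 := by
        refine lintegral_mono fun x => ?_
        by_cases hx : x ≤ 1 - δ
        · rw [Set.indicator_of_mem (by exact hx)]
          have : Prod.mk x ⁻¹' B = Set.pi Set.univ (fun _ => Set.Icc x (x + δ)) := by
            ext u
            rw [Set.mem_univ_pi]
            exact ⟨fun h => h.2, fun h => ⟨hx, h⟩⟩
          rw [this, Measure.pi_pi]
          calc _ ≤ ∏ _j : Fin m, ENNReal.ofReal δ :=
                Finset.prod_le_prod' fun j _ => unif01_Icc_le x δ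
            _ = _ := by simp
        · have : Prod.mk x ⁻¹' B = ∅ := by
            ext u
            simp only [hB, Set.mem_preimage, Set.mem_ofPred_eq, Set.mem_empty_iff_false, iff_false]
            exact fun h => hx h.1
          simp [this]
    _ = ENNReal.ofReal δ ^ m * unif01 (Set.Iic (1 - δ)) := by
        rw [lintegral_indicator measurableSet_Iic, lintegral_const]; simp
    _ ≤ _ := by
        rw [mul_comm]; gcongr; exact unif01_Iic_le δ

lemma fit_prob (δ : ℝ) (hδ : 0 < δ) (hδ1 : δ < 1) (m : ℕ) :
    (Measure.pi fun _ : Fin m => unif01) {u | ∀ i j, u i - u j ≤ δ}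
      ≤ ENNReal.ofReal (δ ^ m * (1 + m * (1 - δ) / δ)) := by
  cases m with
  | zero => simp
  | succ m =>
    have hsub : {u : Fin (m + 1) → ℝ | ∀ i j, u i - u j ≤ δ} ⊆
        (Set.pi Set.univ fun _ => Set.Ioi (1 - δ)) ∪
        ⋃ i, {u | u i ≤ 1 - δ ∧ ∀ j, u (i.succAbove j) ∈ Set.Icc (u i) (u i + δ)} := by
      intro u hu
      obtain ⟨i, -, hi⟩ := Finset.exists_min_image Finset.univ u ⟨0, Finset.mem_univ _⟩
      by_cases h : u i ≤ 1 - δ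
      · right
        refine Set.mem_iUnion.2 ⟨i, h, fun j => ⟨hi _ (Finset.mem_univ _), ?_⟩⟩
        have := hu (i.succAbove j) i
        linarith
      · left
        intro j _
        exact lt_of_lt_of_le (not_le.1 h) (hi j (Finset.mem_univ _))
    refine (measure_mono hsub).trans ((measure_union_le _ _).trans ?_)
    have e1 : (Measure.pi fun _ : Fin (m + 1) => unif01)
        (Set.pi Set.univ fun _ => Set.Ioi (1 - δ)) ≤ ENNReal.ofReal (δ ^ (m + 1)) := by
      rw [Measure.pi_pi]
      calc _ ≤ ∏ _j : Fin (m + 1), ENNReal.ofReal δ :=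
            Finset.prod_le_prod' fun j _ => unif01_Ioi_le δ
        _ = _ := by simp [ENNReal.ofReal_pow hδ.le]
    have e2 : (Measure.pi fun _ : Fin (m + 1) => unif01)
        (⋃ i : Fin (m + 1),
          {u | u i ≤ 1 - δ ∧ ∀ j, u (i.succAbove j) ∈ Set.Icc (u i) (u i + δ)}) ≤
        ENNReal.ofReal ((m + 1) * ((1 - δ) * δ ^ m)) := by
      refine (measure_iUnion_le _).trans ?_
      rw [tsum_fintype]
      calc _ ≤ ∑ _i : Fin (m + 1), ENNReal.ofReal (1 - δ) * ENNReal.ofReal δ ^ m :=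
            Finset.sum_le_sum fun i _ => fit_slice δ m i
        _ = _ := by
          rw [Finset.sum_const, ENNReal.ofReal_mul (by positivity),
            ENNReal.ofReal_mul (by linarith), ENNReal.ofReal_pow hδ.le]
          have : ENNReal.ofReal ((m : ℝ) + 1) = ((m + 1 : ℕ) : ℝ≥0∞) := by
            rw [← ENNReal.ofReal_natCast]; push_cast; rfl
          rw [this]; simp
    refine (add_le_add e1 e2).trans ?_
    rw [← ENNReal.ofReal_add (by positivity)
      (mul_nonneg (by positivity) (mul_nonneg (by linarith) (by positivity)))]
    apply le_of_eq
    congr 1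
    push_cast
    field_simp
    ring

lemma fit_indep {Ω ι : Type*} [MeasurableSpace Ω] [DecidableEq ι] (μ : Measure Ω)
    [IsProbabilityMeasure μ]
    (U : ι → Ω → ℝ) (hU : ∀ i, Measurable (U i)) (hind : iIndepFun U μ)
    (hlaw : ∀ i, μ.map (U i) = unif01) (δ : ℝ) (hδ : 0 < δ) (hδ1 : δ < 1) (s : Finset ι) :
    μ {ω | ∀ i ∈ s, ∀ j ∈ s, U i ω - U j ω ≤ δ}
      ≤ ENNReal.ofReal (δ ^ s.card * (1 + s.card * (1 - δ) / δ)) := by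
  have h1 := hind.precomp (g := fun i : Fin s.card => (s.equivFin.symm i : ι))
    (Subtype.val_injective.comp (Equiv.injective _))
  have h2 := (iIndepFun_iff_map_fun_eq_pi_map (fun i => (hU _).aemeasurable)).1 h1
  simp only [hlaw] at h2
  have hm : MeasurableSet {u : Fin s.card → ℝ | ∀ i j, u i - u j ≤ δ} := by
    simp only [Set.ofPred_forall]
    exact MeasurableSet.iInter fun i => MeasurableSet.iInter fun j =>
      measurableSet_le (by fun_prop) (by fun_prop)
  rw [show {ω | ∀ i ∈ s, ∀ j ∈ s, U i ω - U j ω ≤ δ} =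
    (fun ω (i : Fin s.card) => U (s.equivFin.symm i : ι) ω) ⁻¹'
      {u : Fin s.card → ℝ | ∀ i j, u i - u j ≤ δ} from ?_]
  · rw [← Measure.map_apply (measurable_pi_lambda _ fun i => hU _) hm]
    have h3 : μ.map (fun ω (i : Fin s.card) => U (s.equivFin.symm i : ι) ω) =
      Measure.pi fun _ => unif01 := h2
    rw [h3]
    exact fit_prob δ hδ hδ1 _
  · ext ω
    simp only [Set.mem_ofPred_eq, Set.mem_preimage]
    constructor
    · intro h i j
      exact h _ (s.equivFin.symm i).2 _ (s.equivFin.symm j).2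
    · intro h i hi j hj
      have := h (s.equivFin ⟨i, hi⟩) (s.equivFin ⟨j, hj⟩)
      simpa using this

lemma fit_indep2 {Ω ι : Type*} [MeasurableSpace Ω] [DecidableEq ι] (μ : Measure Ω)
    [IsProbabilityMeasure μ]
    (U : ι → Ω → ℝ) (hU : ∀ i, Measurable (U i)) (hind : iIndepFun U μ)
    (hlaw : ∀ i, μ.map (U i) = unif01) (δ : ℝ) (hδ : 0 < δ) (hδ1 : δ < 1) (s t : Finset ι)
    (hst : Disjoint s t) (m : ℕ) (hs : s.card ≤ m) (ht : t.card ≤ m) :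
    μ ({ω | ∀ i ∈ s, ∀ j ∈ s, U i ω - U j ω ≤ δ} ∩ {ω | ∀ i ∈ t, ∀ j ∈ t, U i ω - U j ω ≤ δ})
      ≤ ENNReal.ofReal ((1 + m * (1 - δ) / δ) ^ 2 * (δ ^ s.card * δ ^ t.card)) := by
  have h1 := hind.indepFun_finset s t hst hU
  have key : ∀ s : Finset ι, {ω | ∀ i ∈ s, ∀ j ∈ s, U i ω - U j ω ≤ δ} =
      (fun ω (i : s) => U i ω) ⁻¹' {u : s → ℝ | ∀ i j, u i - u j ≤ δ} := by
    intro s; ext ω; simp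
  have hm : ∀ s : Finset ι, MeasurableSet {u : s → ℝ | ∀ i j, u i - u j ≤ δ} := by
    intro s
    simp only [Set.ofPred_forall]
    exact MeasurableSet.iInter fun i => MeasurableSet.iInter fun j =>
      measurableSet_le (by fun_prop) (by fun_prop)
  have h2 := h1.measure_inter_preimage_eq_mul _ _ (hm s) (hm t)
  rw [← key, ← key] at h2
  rw [h2]
  have e1 := fit_indep μ U hU hind hlaw δ hδ hδ1 s
  have e2 := fit_indep μ U hU hind hlaw δ hδ hδ1 t
  refine (mul_le_mul' e1 e2).trans ?_
  have h0 : ∀ k : ℕ, 0 ≤ 1 + (k : ℝ) * (1 - δ) / δ := fun k => by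
    have : 0 ≤ 1 - δ := by linarith
    positivity
  have hmono : ∀ k : ℕ, k ≤ m → 1 + (k : ℝ) * (1 - δ) / δ ≤ 1 + (m : ℝ) * (1 - δ) / δ := by
    intro k hk
    have : 0 ≤ 1 - δ := by linarith
    gcongr
  rw [← ENNReal.ofReal_mul (mul_nonneg (by positivity) (h0 _))]
  apply ENNReal.ofReal_le_ofReal
  calc _ = (δ ^ s.card * δ ^ t.card) *
        ((1 + (s.card : ℝ) * (1 - δ) / δ) * (1 + (t.card : ℝ) * (1 - δ) / δ)) := by ring
    _ ≤ (δ ^ s.card * δ ^ t.card) *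
        ((1 + (m : ℝ) * (1 - δ) / δ) * (1 + (m : ℝ) * (1 - δ) / δ)) := by
      exact mul_le_mul_of_nonneg_left
        (mul_le_mul (hmono _ hs) (hmono _ ht) (h0 _) (h0 _)) (by positivity)
    _ = _ := by ring

/-- The law of the (infinite) sequence of potential labels of a single edge. -/
def seqMeasure : Measure (ℕ → ℝ) := Measure.infinitePi fun _ : ℕ => unif01

instance seqMeasure_prob : IsProbabilityMeasure seqMeasure := by
  unfold seqMeasure; infer_instance

/-- Truncate an infinite sequence of labels to the first `k` ones. -/
def trunc (p : ℕ × (ℕ → ℝ)) : LabelSpace := ⟨p.1, fun i => p.2 i⟩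

lemma measurable_sigmaMk (k : ℕ) : Measurable (fun x : Fin k → ℝ => (⟨k, x⟩ : LabelSpace)) := by
  intro s hs
  exact (MeasurableSpace.measurableSet_iInf.1 hs k)

lemma measurable_from_labelSpace {β : Type*} [MeasurableSpace β] {g : LabelSpace → β}
    (h : ∀ k, Measurable fun x : Fin k → ℝ => g ⟨k, x⟩) : Measurable g := by
  intro s hs
  exact MeasurableSpace.measurableSet_iInf.2 fun k => h k hs

lemma measurable_trunc : Measurable trunc := by
  refine measurable_from_prod_countable_right fun k => ?_
  exact (measurable_sigmaMk k).comp (measurable_pi_lambda _ fun i => measurable_pi_apply _)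

lemma seqMeasure_map_fin (k : ℕ) :
    seqMeasure.map (fun u (i : Fin k) => u i) = Measure.pi fun _ : Fin k => unif01 := by
  have h0 : iIndepFun (fun (i : ℕ) (u : ℕ → ℝ) => u i) seqMeasure :=
    iIndepFun_infinitePi (P := fun _ : ℕ => unif01) (X := fun _ x => x) (fun _ => measurable_id)
  have h1 := h0.precomp (g := fun i : Fin k => (i : ℕ)) Fin.val_injective
  have h2 := (iIndepFun_iff_map_fun_eq_pi_map
    (fun i => (measurable_pi_apply _).aemeasurable)).1 h1
  refine Eq.trans h2 ?_
  congr 1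
  funext i
  exact Measure.infinitePi_map_eval (fun _ : ℕ => unif01) i

lemma edgeMeasure_eq (ψ : Measure ℕ) [IsProbabilityMeasure ψ] :
    edgeMeasure unif01 ψ = (ψ.prod seqMeasure).map trunc := by
  conv_rhs => rw [← Measure.sum_smul_dirac ψ]
  rw [Measure.prod_sum_left, Measure.map_sum measurable_trunc.aemeasurable]
  unfold edgeMeasure
  congr 1
  funext k
  rw [Measure.prod_smul_left, Measure.map_smul, Measure.dirac_prod,
    Measure.map_map measurable_trunc (by fun_prop), ← seqMeasure_map_fin,
    Measure.map_map (measurable_sigmaMk k) (by fun_prop)]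
  rfl

instance edgeMeasure_prob (ψ : Measure ℕ) [IsProbabilityMeasure ψ] :
    IsProbabilityMeasure (edgeMeasure unif01 ψ) := by
  rw [edgeMeasure_eq]
  exact Measure.isProbabilityMeasure_map measurable_trunc.aemeasurable

/-- The coupled probability space: multiplicities and label sequences. -/
def coup (S : Type*) [Fintype S] (ψ : Measure ℕ) : Measure ((S → ℕ) × (S → ℕ → ℝ)) :=
  (Measure.pi fun _ : S => ψ).prod (Measure.pi fun _ : S => seqMeasure)

/-- The sample determined by a point of the coupled space. -/
def coupMap {S : Type*} (p : (S → ℕ) × (S → ℕ → ℝ)) : S → LabelSpace :=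
  fun f => trunc (p.1 f, p.2 f)

lemma measurable_coupMap {S : Type*} : Measurable (coupMap (S := S)) :=
  measurable_pi_lambda _ fun f => measurable_trunc.comp (by fun_prop)

lemma model_eq_coup {S : Type*} [Fintype S] (ψ : Measure ℕ) [IsProbabilityMeasure ψ] :
    (Measure.pi fun _ : S => edgeMeasure unif01 ψ) = (coup S ψ).map coupMap := by
  have h := measurePreserving_arrowProdEquivProdArrow ℕ (ℕ → ℝ) S (fun _ => ψ)
    (fun _ => seqMeasure)
  unfold coup
  rw [← h.map_eq, Measure.map_map measurable_coupMap h.measurable]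
  rw [edgeMeasure_eq]
  have : IsProbabilityMeasure ((ψ.prod seqMeasure).map trunc) :=
    Measure.isProbabilityMeasure_map measurable_trunc.aemeasurable
  rw [← Measure.pi_map_pi (fun _ => measurable_trunc.aemeasurable)]
  rfl

lemma seq_iIndep {S : Type*} [Fintype S] :
    iIndepFun (fun (p : S × ℕ) (u : S → ℕ → ℝ) => u p.1 p.2)
      (Measure.pi fun _ : S => seqMeasure) := by
  have := iIndepFun_uncurry_infinitePi' (ι := S) (κ := ℕ) (X := fun _ _ (x : ℝ) => x)
    (fun _ _ => unif01) (fun _ _ => measurable_id)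
  rw [Measure.infinitePi_eq_pi] at this
  exact this

lemma seq_law {S : Type*} [Fintype S] (p : S × ℕ) :
    (Measure.pi fun _ : S => seqMeasure).map (fun u => u p.1 p.2) = unif01 := by
  have h1 := (measurePreserving_eval (fun _ : S => seqMeasure) p.1)
  have h2 := measurePreserving_eval_infinitePi (fun _ : ℕ => unif01) p.2
  exact (h2.comp h1).map_eq

lemma measurable_cnt : Measurable (fun x : LabelSpace => x.1) :=
  measurable_from_labelSpace fun _ => measurable_const

lemma measurable_labVal {V : Type*} (f : Sym2 V) (j : ℕ) :
    Measurable (fun ω : Sym2 V → LabelSpace => labVal ω f j) := by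
  have : Measurable (fun x : LabelSpace => if h : j < x.1 then x.2 ⟨j, h⟩ else 0) := by
    refine measurable_from_labelSpace fun k => ?_
    by_cases h : j < k
    · simp only [h, dite_true]; exact measurable_pi_apply (⟨j, h⟩ : Fin k)
    · simp only [h, dite_false]; exact measurable_const
  exact this.comp (measurable_pi_apply f)

/-- The event that `(φ, τ)` is an occurrence (conditions on the sample only). -/
def occ {VH : Type*} {n : ℕ} (H : SimpleGraph VH) (P : Sym2 VH → Sym2 VH → Prop)
    (δ : ℝ) (φ : VH → Fin n) (τ : Sym2 VH → ℕ) : Set (Sym2 (Fin n) → LabelSpace) :=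
  {ω | (∀ e ∈ H.edgeSet, τ e < (ω (Sym2.map φ e)).1) ∧
    (∀ e ∈ H.edgeSet, ∀ f ∈ H.edgeSet,
      labVal ω (Sym2.map φ e) (τ e) - labVal ω (Sym2.map φ f) (τ f) ≤ δ) ∧
    (∀ e f, P e f →
      labVal ω (Sym2.map φ e) (τ e) < labVal ω (Sym2.map φ f) (τ f))}

lemma measurableSet_occ {VH : Type*} [Finite VH] {n : ℕ} (H : SimpleGraph VH)
    (P : Sym2 VH → Sym2 VH → Prop) (δ : ℝ) (φ : VH → Fin n) (τ : Sym2 VH → ℕ) :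
    MeasurableSet (occ H P δ φ τ) := by
  have : Finite (Sym2 VH) := Quot.finite _
  have h : occ H P δ φ τ =
      (⋂ e, ⋂ (_ : e ∈ H.edgeSet), {ω | τ e < (ω (Sym2.map φ e)).1}) ∩
      ((⋂ e, ⋂ (_ : e ∈ H.edgeSet), ⋂ f, ⋂ (_ : f ∈ H.edgeSet),
        {ω | labVal ω (Sym2.map φ e) (τ e) - labVal ω (Sym2.map φ f) (τ f) ≤ δ}) ∩
      (⋂ e, ⋂ f, ⋂ (_ : P e f),
        {ω | labVal ω (Sym2.map φ e) (τ e) < labVal ω (Sym2.map φ f) (τ f)})) := by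
    ext ω
    simp [occ]
  rw [h]
  refine MeasurableSet.inter ?_ (MeasurableSet.inter ?_ ?_)
  · refine MeasurableSet.iInter fun e => MeasurableSet.iInter fun _ => ?_
    exact measurableSet_lt measurable_const (measurable_cnt.comp (measurable_pi_apply _))
  · refine MeasurableSet.iInter fun e => MeasurableSet.iInter fun _ =>
      MeasurableSet.iInter fun f => MeasurableSet.iInter fun _ => ?_
    exact measurableSet_le ((measurable_labVal _ _).sub (measurable_labVal _ _)) measurable_const
  · refine MeasurableSet.iInter fun e => MeasurableSet.iInter fun f =>
      MeasurableSet.iInter fun _ => ?_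
    exact measurableSet_lt (measurable_labVal _ _) (measurable_labVal _ _)

lemma prod_ite_card {S : Type*} [Fintype S] (δ : ℝ) (F : Finset S) (p : S → Prop)
    [DecidablePred p] (h : ∀ f, f ∈ F ↔ p f) : ∏ f, (if p f then δ else 1) = δ ^ F.card := by
  rw [← Finset.prod_filter, Finset.prod_const]
  congr 2
  ext f
  simp [h]

open Classical in
/-- The set of edges of `K_n` used by `φ`. -/
def img {VH : Type*} [Fintype VH] {n : ℕ} (H : SimpleGraph VH) (φ : VH → Fin n) :
    Finset (Sym2 (Fin n)) :=
  H.edgeSet.toFinset.image (Sym2.map φ)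

lemma mem_img {VH : Type*} [Fintype VH] {n : ℕ} (H : SimpleGraph VH) (φ : VH → Fin n)
    (f : Sym2 (Fin n)) : f ∈ img H φ ↔ ∃ e ∈ H.edgeSet, Sym2.map φ e = f := by
  simp [img]

lemma card_img {VH : Type*} [Fintype VH] {n : ℕ} (H : SimpleGraph VH) (φ : VH → Fin n)
    (hφ : Function.Injective φ) : (img H φ).card = H.edgeSet.ncard := by
  classical
  unfold img
  rw [Finset.card_image_of_injective _ (Sym2.map.injective hφ), Set.ncard_eq_toFinset_card']

/-- The extension of a choice of indices to all edges of `K_n`. -/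
def ext {VH : Type*} {n : ℕ} (φ : VH → Fin n) (τ : Sym2 VH → ℕ) : Sym2 (Fin n) → ℕ :=
  Function.extend (Sym2.map φ) τ 0

lemma ext_apply {VH : Type*} {n : ℕ} {φ : VH → Fin n} (hφ : Function.Injective φ)
    (τ : Sym2 VH → ℕ) (e : Sym2 VH) : ext φ τ (Sym2.map φ e) = τ e :=
  (Sym2.map.injective hφ).extend_apply _ _ _

open Classical in
/-- The contribution of one edge of `K_n` to the bound. -/
def wt (ψ : Measure ℕ) (δ : ℝ) (p q : Prop) (x : ℕ × ℕ) : ℝ :=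
  ((if p then δ else 1) * (if q ∧ ¬ (p ∧ x.1 = x.2) then δ else 1)) *
    ψ.real {l | (p → x.1 < l) ∧ (q → x.2 < l)}

lemma wt_nonneg (ψ : Measure ℕ) (δ : ℝ) (hδ : 0 < δ) (p q : Prop) (x : ℕ × ℕ) :
    0 ≤ wt ψ δ p q x := by
  unfold wt
  have := hδ.le
  refine mul_nonneg (mul_nonneg ?_ ?_) measureReal_nonneg <;> split_ifs <;> positivity

lemma pair_bound {VH : Type*} [Fintype VH] {n : ℕ} (H : SimpleGraph VH)
    (P : Sym2 VH → Sym2 VH → Prop) (ψ : Measure ℕ) [IsProbabilityMeasure ψ]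
    (δ : ℝ) (hδ : 0 < δ) (hδ1 : δ < 1)
    (φ₁ φ₂ : VH → Fin n) (h₁ : Function.Injective φ₁) (h₂ : Function.Injective φ₂)
    (τ₁ τ₂ : Sym2 VH → ℕ) :
    (contModel (Fin n) ψ).real (occ H P δ φ₁ τ₁ ∩ occ H P δ φ₂ τ₂) ≤
      (1 + H.edgeSet.ncard * (1 - δ) / δ) ^ 2 *
        ∏ f, wt ψ δ (f ∈ img H φ₁) (f ∈ img H φ₂) (ext φ₁ τ₁ f, ext φ₂ τ₂ f) := by
  classical
  set F₁ := img H φ₁ with hF₁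
  set F₂ := img H φ₂ with hF₂
  set σ₁ := ext φ₁ τ₁ with hσ₁
  set σ₂ := ext φ₂ τ₂ with hσ₂
  set F₃ := F₂.filter (fun f => ¬ (f ∈ F₁ ∧ σ₁ f = σ₂ f)) with hF₃
  set s : Finset (Sym2 (Fin n) × ℕ) := F₁.image (fun f => (f, σ₁ f)) with hs
  set t : Finset (Sym2 (Fin n) × ℕ) := F₃.image (fun f => (f, σ₂ f)) with ht
  have hsc : s.card = F₁.card :=
    Finset.card_image_of_injective _ fun a b h => (Prod.mk.inj h).1
  have htc : t.card = F₃.card :=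
    Finset.card_image_of_injective _ fun a b h => (Prod.mk.inj h).1
  have hst : Disjoint s t := by
    rw [Finset.disjoint_left]
    rintro ⟨f, j⟩ hx hy
    simp only [hs, ht, hF₃, Finset.mem_image, Finset.mem_filter, Prod.mk.injEq] at hx hy
    obtain ⟨a, ha, rfl, rfl⟩ := hx
    obtain ⟨b, ⟨hb, hb'⟩, rfl, hb2⟩ := hy
    exact hb' ⟨ha, hb2.symm⟩
  set m := H.edgeSet.ncard with hm
  have hF₁c : F₁.card = m := card_img H φ₁ h₁
  have hF₂c : F₂.card = m := card_img H φ₂ h₂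
  have hF₃c : F₃.card ≤ m := hF₂c ▸ Finset.card_filter_le _ _
  set L : Set (Sym2 (Fin n) → ℕ) := Set.pi Set.univ
    (fun f => {l | (f ∈ F₁ → σ₁ f < l) ∧ (f ∈ F₂ → σ₂ f < l)}) with hL
  set R : Set (Sym2 (Fin n) → ℕ → ℝ) :=
    {u | ∀ i ∈ s, ∀ j ∈ s, u i.1 i.2 - u j.1 j.2 ≤ δ} ∩
      {u | ∀ i ∈ t, ∀ j ∈ t, u i.1 i.2 - u j.1 j.2 ≤ δ} with hR
  have hsub : coupMap ⁻¹' (occ H P δ φ₁ τ₁ ∩ occ H P δ φ₂ τ₂) ⊆ L ×ˢ R := by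
    have hval : ∀ (φ : VH → Fin n) (τ : Sym2 VH → ℕ), Function.Injective φ →
        ∀ p : (Sym2 (Fin n) → ℕ) × (Sym2 (Fin n) → ℕ → ℝ),
        coupMap p ∈ occ H P δ φ τ →
        (∀ f ∈ img H φ, ext φ τ f < p.1 f) ∧
        ∀ f ∈ img H φ, ∀ g ∈ img H φ, p.2 f (ext φ τ f) - p.2 g (ext φ τ g) ≤ δ := by
      intro φ τ hφ p hp
      have hlt : ∀ e ∈ H.edgeSet, τ e < p.1 (Sym2.map φ e) := hp.1
      have hlab : ∀ e ∈ H.edgeSet, labVal (coupMap p) (Sym2.map φ e) (τ e) =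
          p.2 (Sym2.map φ e) (τ e) := by
        intro e he
        unfold labVal
        rw [dif_pos (show τ e < (coupMap p (Sym2.map φ e)).1 from hlt e he)]
        rfl
      refine ⟨?_, ?_⟩
      · intro f hf
        obtain ⟨e, he, rfl⟩ := (mem_img H φ f).1 hf
        rw [ext_apply hφ]; exact hlt e he
      · intro f hf g hg
        obtain ⟨e, he, rfl⟩ := (mem_img H φ f).1 hf
        obtain ⟨e', he', rfl⟩ := (mem_img H φ g).1 hg
        rw [ext_apply hφ, ext_apply hφ, ← hlab e he, ← hlab e' he']
        exact hp.2.1 e he e' he'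
    rintro ⟨l, u⟩ ⟨hp1, hp2⟩
    obtain ⟨a1, b1⟩ := hval φ₁ τ₁ h₁ _ hp1
    obtain ⟨a2, b2⟩ := hval φ₂ τ₂ h₂ _ hp2
    refine ⟨fun f _ => ⟨a1 f, a2 f⟩, ?_, ?_⟩
    · intro i hi j hj
      obtain ⟨f, hf, rfl⟩ := Finset.mem_image.1 hi
      obtain ⟨g, hg, rfl⟩ := Finset.mem_image.1 hj
      exact b1 f hf g hg
    · intro i hi j hj
      obtain ⟨f, hf, rfl⟩ := Finset.mem_image.1 hi
      obtain ⟨g, hg, rfl⟩ := Finset.mem_image.1 hj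
      exact b2 f (Finset.mem_filter.1 hf).1 g (Finset.mem_filter.1 hg).1
  have hRle := fit_indep2 (Measure.pi fun _ : Sym2 (Fin n) => seqMeasure)
    (fun (p : Sym2 (Fin n) × ℕ) (u : Sym2 (Fin n) → ℕ → ℝ) => u p.1 p.2)
    (fun p => by fun_prop) seq_iIndep seq_law δ hδ hδ1 s t hst m
    (by rw [hsc, hF₁c]) (by rw [htc]; exact hF₃c)
  have hc : 0 ≤ (1 + (m : ℝ) * (1 - δ) / δ) ^ 2 := by positivity
  have hmeas : (contModel (Fin n) ψ) (occ H P δ φ₁ τ₁ ∩ occ H P δ φ₂ τ₂) ≤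
      (∏ f, ψ {l | (f ∈ F₁ → σ₁ f < l) ∧ (f ∈ F₂ → σ₂ f < l)}) *
      ENNReal.ofReal ((1 + m * (1 - δ) / δ) ^ 2 * (δ ^ s.card * δ ^ t.card)) := by
    unfold contModel model
    rw [model_eq_coup, Measure.map_apply measurable_coupMap
      ((measurableSet_occ _ _ _ _ _).inter (measurableSet_occ _ _ _ _ _))]
    refine (measure_mono hsub).trans ?_
    unfold coup
    rw [Measure.prod_prod, hL, Measure.pi_pi]
    gcongr
  have hfin : (∏ f, ψ {l | (f ∈ F₁ → σ₁ f < l) ∧ (f ∈ F₂ → σ₂ f < l)}) *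
      ENNReal.ofReal ((1 + m * (1 - δ) / δ) ^ 2 * (δ ^ s.card * δ ^ t.card)) ≠ ⊤ :=
    ENNReal.mul_ne_top (ENNReal.prod_ne_top fun f _ => measure_ne_top _ _) ENNReal.ofReal_ne_top
  have hreal := ENNReal.toReal_mono hfin hmeas
  rw [ENNReal.toReal_mul, ENNReal.toReal_prod, ENNReal.toReal_ofReal (by positivity)] at hreal
  refine hreal.trans (le_of_eq ?_)
  unfold wt
  rw [Finset.prod_mul_distrib, Finset.prod_mul_distrib, hsc, htc]
  have q1 : (∏ f, @ite ℝ (f ∈ F₁) (Classical.propDecidable _) δ 1) = δ ^ F₁.card :=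
    @prod_ite_card _ _ δ F₁ (fun f => f ∈ F₁) (fun f => Classical.propDecidable _)
      (fun f => Iff.rfl)
  have q2 := prod_ite_card δ F₃ (fun f => f ∈ F₂ ∧ ¬ (f ∈ F₁ ∧ σ₁ f = σ₂ f))
    (fun f => by rw [hF₃, Finset.mem_filter])
  rw [q1, ← q2]
  have q3 : ∀ a b c c' d : ℝ, c = c' → a * (d * (b * c)) = d * (b * c' * a) := by
    intro a b c c' d h
    rw [h]; ring
  refine q3 _ _ _ _ _ (Finset.prod_congr rfl fun f _ => ?_)
  congr

lemma sum_mul_measure_le (ψ : Measure ℕ) [IsProbabilityMeasure ψ] {ι : Type*} (s : Finset ι)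
    (w : ι → ℝ) (R : ι → ℕ → Prop) [∀ l, DecidablePred fun x => R x l] (g : ℕ → ℝ)
    (hg : Integrable g ψ) (h : ∀ l, ∑ x ∈ s.filter (fun x => R x l), w x ≤ g l) :
    ∑ x ∈ s, w x * ψ.real {l | R x l} ≤ ∫ l, g l ∂ψ := by
  have hi : ∀ x ∈ s, Integrable (fun l => w x * ({l | R x l} : Set ℕ).indicator 1 l) ψ :=
    fun x _ => ((integrable_const (1 : ℝ)).indicator (MeasurableSet.of_discrete)).const_mul _
  have h1 : ∑ x ∈ s, w x * ψ.real {l | R x l} =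
      ∫ l, ∑ x ∈ s, w x * ({l | R x l} : Set ℕ).indicator 1 l ∂ψ := by
    rw [integral_finsetSum _ hi]
    refine Finset.sum_congr rfl fun x _ => ?_
    rw [integral_const_mul, integral_indicator_one MeasurableSet.of_discrete]
  rw [h1]
  refine integral_mono (integrable_finsetSum _ hi) hg fun l => ?_
  refine le_trans (le_of_eq ?_) (h l)
  rw [Finset.sum_filter]
  refine Finset.sum_congr rfl fun x _ => ?_
  by_cases hx : R x l <;> simp [hx]

open Classical in
/-- The range of pairs of indices relevant for one edge of `K_n`. -/
def rng (C : ℕ) (p q : Prop) : Finset (ℕ × ℕ) :=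
  (if p then Finset.range C else {0}) ×ˢ (if q then Finset.range C else {0})

open Classical in
lemma wt_sum (ψ : Measure ℕ) (hψ : IsLMD ψ) (δ : ℝ) (hδ : 0 < δ) (hδ1 : δ < 1) (C : ℕ)
    (p q : Prop) :
    ∑ x ∈ rng C p q, wt ψ δ p q x ≤
      (if p then δ * lmdMean ψ else 1) * (if q then δ * lmdMean ψ else 1) *
      (if p ∧ q then (δ * lmdSq ψ + lmdMean ψ - δ * lmdMean ψ) / (δ * lmdMean ψ ^ 2) else 1) := by
  obtain ⟨hpr, hi1, hi2, hpos⟩ := hψ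
  have hr : 0 < lmdMean ψ := hpos
  have single : ∑ a ∈ Finset.range C, δ * ψ.real {l | a < l} ≤ δ * lmdMean ψ := by
    unfold lmdMean
    rw [← integral_const_mul]
    refine sum_mul_measure_le ψ _ (fun _ => δ) (fun a l => a < l) _ (hi1.const_mul δ) fun l => ?_
    rw [Finset.sum_const, nsmul_eq_mul, mul_comm]
    gcongr
    calc _ ≤ (Finset.range l).card := Finset.card_le_card (by intro x; simp)
      _ = l := Finset.card_range l
  by_cases hp : p <;> by_cases hq : q
  · simp only [hp, hq, rng, wt, if_true, true_and, and_self, forall_true_left]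
    have e : δ * lmdMean ψ * (δ * lmdMean ψ) *
        ((δ * lmdSq ψ + lmdMean ψ - δ * lmdMean ψ) / (δ * lmdMean ψ ^ 2)) =
        ∫ l : ℕ, (δ * (δ * (l : ℝ) ^ 2 + ((l : ℝ) - δ * l))) ∂ψ := by
      have hs : Integrable (fun l : ℕ => (l : ℝ) - δ * l) ψ := hi1.sub (hi1.const_mul δ)
      rw [integral_const_mul, integral_add (hi2.const_mul _) hs,
        integral_sub hi1 (hi1.const_mul _), integral_const_mul, integral_const_mul]
      change _ = δ * (δ * lmdSq ψ + (lmdMean ψ - δ * lmdMean ψ))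
      field_simp
      ring
    rw [e]
    refine sum_mul_measure_le ψ _ (fun x : ℕ × ℕ => δ * if ¬ x.1 = x.2 then δ else 1)
      (fun x l => x.1 < l ∧ x.2 < l) _
      (((hi2.const_mul _).add (hi1.sub (hi1.const_mul _))).const_mul δ) fun l => ?_
    have hw : ∀ x : ℕ × ℕ, 0 ≤ δ * (if ¬ x.1 = x.2 then δ else 1) := fun x => by
      split_ifs <;> positivity
    refine (Finset.sum_le_sum_of_subset_of_nonneg
      (t := Finset.range l ×ˢ Finset.range l) ?_ fun x _ _ => hw x).trans (le_of_eq ?_)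
    · intro x hx
      have := (Finset.mem_filter.1 hx).2
      simpa using this
    · rw [← Finset.mul_sum, Finset.sum_product]
      congr 1
      have : ∀ a ∈ Finset.range l, ∑ b ∈ Finset.range l, (if ¬ a = b then δ else 1) =
          δ * l + (1 - δ) := by
        intro a ha
        have h2 : ∀ b, (if ¬ a = b then δ else 1) = δ + if a = b then 1 - δ else 0 := by
          intro b; split_ifs <;> simp_all
        simp only [h2]
        rw [Finset.sum_add_distrib, Finset.sum_ite_eq, if_pos ha]
        simp [mul_comm]
      rw [Finset.sum_congr rfl this]
      simp
      ring
  · simp only [hp, hq, rng, wt, if_true, if_false, true_and, and_false, false_and,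
      forall_true_left, IsEmpty.forall_iff, and_true, mul_one, Finset.sum_product,
      Finset.sum_singleton]
    exact single
  · simp only [hp, hq, rng, wt, if_true, if_false, true_and, and_false, false_and, not_false_eq_true,
      forall_true_left, IsEmpty.forall_iff, and_true, mul_one, one_mul, Finset.sum_product,
      Finset.sum_singleton]
    exact single
  · simp [hp, hq, rng, wt]

lemma pair_sum {VH : Type*} [Fintype VH] [DecidableEq VH] {n : ℕ} (H : SimpleGraph VH)
    (P : Sym2 VH → Sym2 VH → Prop) (ψ : Measure ℕ) (hψ : IsLMD ψ)
    (δ : ℝ) (hδ : 0 < δ) (hδ1 : δ < 1) (C : ℕ) (T : Finset (Sym2 VH → ℕ))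
    (hT : ∀ τ ∈ T, (∀ e, e ∉ H.edgeSet → τ e = 0) ∧ ∀ e ∈ H.edgeSet, τ e < C)
    (φ₁ φ₂ : VH → Fin n) (h₁ : Function.Injective φ₁) (h₂ : Function.Injective φ₂) :
    ∑ x ∈ T ×ˢ T, (contModel (Fin n) ψ).real (occ H P δ φ₁ x.1 ∩ occ H P δ φ₂ x.2) ≤
      δ ^ (2 * H.edgeSet.ncard) * lmdMean ψ ^ (2 * H.edgeSet.ncard)
        * (1 + H.edgeSet.ncard * (1 - δ) / δ) ^ 2 *
      ((δ * lmdSq ψ + lmdMean ψ - δ * lmdMean ψ) / (δ * lmdMean ψ ^ 2))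
              ^ (sharedEdges H φ₁ φ₂).ncard := by
  classical
  have := hψ.1
  have hc : 0 ≤ (1 + (H.edgeSet.ncard : ℝ) * (1 - δ) / δ) ^ 2 := by positivity
  set B := (δ * lmdSq ψ + lmdMean ψ - δ * lmdMean ψ) / (δ * lmdMean ψ ^ 2) with hB
  have step1 : ∑ x ∈ T ×ˢ T,
      ∏ f, wt ψ δ (f ∈ img H φ₁) (f ∈ img H φ₂) (ext φ₁ x.1 f, ext φ₂ x.2 f) ≤
      ∑ σ ∈ Fintype.piFinset (fun f => rng C (f ∈ img H φ₁) (f ∈ img H φ₂)),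
        ∏ f, wt ψ δ (f ∈ img H φ₁) (f ∈ img H φ₂) (σ f) := by
    rw [← Finset.sum_image (s := T ×ˢ T)
      (f := fun σ : Sym2 (Fin n) → ℕ × ℕ => ∏ f, wt ψ δ (f ∈ img H φ₁) (f ∈ img H φ₂) (σ f))
      (g := fun x f => (ext φ₁ x.1 f, ext φ₂ x.2 f))]
    · refine Finset.sum_le_sum_of_subset_of_nonneg ?_
        fun σ _ _ => Finset.prod_nonneg fun f _ => wt_nonneg ψ δ hδ _ _ _
      intro σ hσ
      obtain ⟨x, hx, rfl⟩ := Finset.mem_image.1 hσ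
      obtain ⟨hx1, hx2⟩ := Finset.mem_product.1 hx
      have key : ∀ (φ : VH → Fin n) (τ : Sym2 VH → ℕ), Function.Injective φ → τ ∈ T →
          ∀ f, ext φ τ f ∈ (if f ∈ img H φ then Finset.range C else {0}) := by
        intro φ τ hφ hτ f
        split_ifs with hf
        · obtain ⟨e, he, rfl⟩ := (mem_img H φ f).1 hf
          rw [ext_apply hφ]
          exact Finset.mem_range.2 ((hT τ hτ).2 e he)
        · rw [Finset.mem_singleton]
          by_cases h : ∃ e, Sym2.map φ e = f
          · obtain ⟨e, rfl⟩ := h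
            rw [ext_apply hφ]
            exact (hT τ hτ).1 e fun he => hf ((mem_img H φ _).2 ⟨e, he, rfl⟩)
          · exact Function.extend_apply' _ _ _ h
      rw [Fintype.mem_piFinset]
      intro f
      have k1 := key φ₁ x.1 h₁ hx1 f
      have k2 := key φ₂ x.2 h₂ hx2 f
      unfold rng
      rw [Finset.mem_product]
      constructor
      · convert k1
      · convert k2
    · intro x _ y _ hxy
      have hxy' := fun f => congrFun hxy f
      refine Prod.ext (funext fun e => ?_) (funext fun e => ?_)
      · have := congrArg Prod.fst (hxy' (Sym2.map φ₁ e))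
        simpa [ext_apply h₁] using this
      · have := congrArg Prod.snd (hxy' (Sym2.map φ₂ e))
        simpa [ext_apply h₂] using this
  have hshared : (sharedEdges H φ₁ φ₂).ncard = (img H φ₁ ∩ img H φ₂).card := by
    rw [← Set.ncard_coe_finset]
    congr 1
    ext f
    simp [sharedEdges, mem_img]
  calc _ ≤ ∑ x ∈ T ×ˢ T, (1 + H.edgeSet.ncard * (1 - δ) / δ) ^ 2 *
        ∏ f, wt ψ δ (f ∈ img H φ₁) (f ∈ img H φ₂) (ext φ₁ x.1 f, ext φ₂ x.2 f) :=
        Finset.sum_le_sum fun x _ => pair_bound H P ψ δ hδ hδ1 φ₁ φ₂ h₁ h₂ x.1 x.2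
    _ ≤ (1 + H.edgeSet.ncard * (1 - δ) / δ) ^ 2 *
        ∏ f, ∑ x ∈ rng C (f ∈ img H φ₁) (f ∈ img H φ₂),
          wt ψ δ (f ∈ img H φ₁) (f ∈ img H φ₂) x := by
        rw [← Finset.mul_sum, Finset.prod_univ_sum]
        exact mul_le_mul_of_nonneg_left step1 hc
    _ ≤ (1 + H.edgeSet.ncard * (1 - δ) / δ) ^ 2 *
        ∏ f, ((if f ∈ img H φ₁ then δ * lmdMean ψ else 1) *
          (if f ∈ img H φ₂ then δ * lmdMean ψ else 1) *
          (if f ∈ img H φ₁ ∧ f ∈ img H φ₂ then B else 1)) := by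
        refine mul_le_mul_of_nonneg_left (Finset.prod_le_prod (fun f _ => ?_) fun f _ => ?_) hc
        · exact Finset.sum_nonneg fun x _ => wt_nonneg ψ δ hδ _ _ _
        · refine (wt_sum ψ hψ δ hδ hδ1 C (f ∈ img H φ₁) (f ∈ img H φ₂)).trans (le_of_eq ?_)
          congr!
    _ = _ := by
        rw [Finset.prod_mul_distrib, Finset.prod_mul_distrib,
          prod_ite_card _ (img H φ₁) _ (fun f => Iff.rfl),
          prod_ite_card _ (img H φ₂) _ (fun f => Iff.rfl),
          prod_ite_card _ (img H φ₁ ∩ img H φ₂) _ (fun f => Finset.mem_inter),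
          card_img H φ₁ h₁, card_img H φ₂ h₂, hshared, ← mul_pow]
        ring

lemma ae_bounded {n : ℕ} (ψ : Measure ℕ) [IsProbabilityMeasure ψ] (C : ℕ)
    (hC : ψ {k | C < k} = 0) :
    ∀ᵐ ω ∂(contModel (Fin n) ψ), ∀ f, (ω f).1 ≤ C := by
  rw [ae_all_iff]
  intro f
  have h1 : ∀ᵐ x ∂(edgeMeasure unif01 ψ), x.1 ≤ C := by
    rw [edgeMeasure_eq, ae_map_iff measurable_trunc.aemeasurable
      (measurableSet_le measurable_cnt measurable_const)]
    have h2 : ∀ᵐ k ∂ψ, k ≤ C := by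
      rw [ae_iff]
      simpa using hC
    exact Measure.quasiMeasurePreserving_fst.ae h2
  exact (measurePreserving_eval (fun _ : Sym2 (Fin n) => edgeMeasure unif01 ψ)
    f).quasiMeasurePreserving.ae h1

lemma occ_congr {VH : Type*} [Fintype VH] {n : ℕ} (H : SimpleGraph VH)
    (P : Sym2 VH → Sym2 VH → Prop) (hP : StrictPartialOrderOn H.edgeSet P) (δ : ℝ)
    (φ : VH → Fin n) (τ : Sym2 VH → ℕ) (ω ω' : Sym2 (Fin n) → LabelSpace)
    (h : ∀ f ∈ img H φ, ω f = ω' f) : ω ∈ occ H P δ φ τ → ω' ∈ occ H P δ φ τ := by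
  have h0 : ∀ e ∈ H.edgeSet, ω (Sym2.map φ e) = ω' (Sym2.map φ e) :=
    fun e he => h _ ((mem_img H φ _).2 ⟨e, he, rfl⟩)
  have hv : ∀ e ∈ H.edgeSet, ∀ j, labVal ω (Sym2.map φ e) j = labVal ω' (Sym2.map φ e) j := by
    intro e he j
    unfold labVal
    rw [h0 e he]
  rintro ⟨a, b, c⟩
  refine ⟨fun e he => ?_, fun e he f hf => ?_, fun e f hef => ?_⟩
  · rw [← h0 e he]; exact a e he
  · rw [← hv e he, ← hv f hf]; exact b e he f hf
  · rw [← hv e (hP.2.2 _ _ hef).1, ← hv f (hP.2.2 _ _ hef).2]; exact c e f hef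

open Classical in
/-- Extend a partial sample by the empty label tuple. -/
def fill {n : ℕ} (F : Finset (Sym2 (Fin n))) (x : F → LabelSpace) :
    Sym2 (Fin n) → LabelSpace :=
  fun f => if h : f ∈ F then x ⟨f, h⟩ else ⟨0, fun _ => 0⟩

lemma measurable_fill {n : ℕ} (F : Finset (Sym2 (Fin n))) : Measurable (fill F) := by
  refine measurable_pi_lambda _ fun f => ?_
  unfold fill
  split_ifs
  · exact measurable_pi_apply _
  · exact measurable_const

/-- The indicator of an occurrence. -/
def ind {VH : Type*} {n : ℕ} (H : SimpleGraph VH) (P : Sym2 VH → Sym2 VH → Prop)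
    (δ : ℝ) (p : (VH → Fin n) × (Sym2 VH → ℕ)) : (Sym2 (Fin n) → LabelSpace) → ℝ :=
  (occ H P δ p.1 p.2).indicator 1

lemma measurable_ind {VH : Type*} [Finite VH] {n : ℕ} (H : SimpleGraph VH)
    (P : Sym2 VH → Sym2 VH → Prop) (δ : ℝ) (p : (VH → Fin n) × (Sym2 VH → ℕ)) :
    Measurable (ind H P δ p) :=
  measurable_one.indicator (measurableSet_occ _ _ _ _ _)

instance contModel_prob (n : ℕ) (ψ : Measure ℕ) [IsProbabilityMeasure ψ] :
    IsProbabilityMeasure (contModel (Fin n) ψ) := by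
  unfold contModel model
  infer_instance

lemma memLp_ind {VH : Type*} [Finite VH] {n : ℕ} (H : SimpleGraph VH)
    (P : Sym2 VH → Sym2 VH → Prop) (δ : ℝ) (ψ : Measure ℕ) [IsProbabilityMeasure ψ]
    (p : (VH → Fin n) × (Sym2 VH → ℕ)) :
    MemLp (ind H P δ p) 2 (contModel (Fin n) ψ) := by
  refine MemLp.of_bound (measurable_ind H P δ p).aestronglyMeasurable 1
    (Eventually.of_forall fun ω => ?_)
  unfold ind
  by_cases h : ω ∈ occ H P δ p.1 p.2 <;> simp [h]

lemma cov_le {VH : Type*} [Finite VH] {n : ℕ} (H : SimpleGraph VH)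
    (P : Sym2 VH → Sym2 VH → Prop) (δ : ℝ) (ψ : Measure ℕ) [IsProbabilityMeasure ψ]
    (p q : (VH → Fin n) × (Sym2 VH → ℕ)) :
    covariance (ind H P δ p) (ind H P δ q) (contModel (Fin n) ψ) ≤
      (contModel (Fin n) ψ).real (occ H P δ p.1 p.2 ∩ occ H P δ q.1 q.2) := by
  rw [covariance_eq_sub (memLp_ind H P δ ψ p) (memLp_ind H P δ ψ q)]
  have h1 : ind H P δ p * ind H P δ q =
      (occ H P δ p.1 p.2 ∩ occ H P δ q.1 q.2).indicator 1 := by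
    unfold ind
    rw [Set.inter_indicator_one]
  have hn : ∀ p, 0 ≤ ∫ ω, ind H P δ p ω ∂(contModel (Fin n) ψ) := fun p =>
    integral_nonneg fun ω => Set.indicator_nonneg (fun _ _ => zero_le_one) ω
  rw [h1, integral_indicator_one ((measurableSet_occ _ _ _ _ _).inter
    (measurableSet_occ _ _ _ _ _))]
  have := mul_nonneg (hn p) (hn q)
  linarith

lemma cov_zero {VH : Type*} [Fintype VH] {n : ℕ} (H : SimpleGraph VH)
    (P : Sym2 VH → Sym2 VH → Prop) (hP : StrictPartialOrderOn H.edgeSet P) (δ : ℝ)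
    (ψ : Measure ℕ) [IsProbabilityMeasure ψ]
    (p q : (VH → Fin n) × (Sym2 VH → ℕ)) (h : ¬ (sharedEdges H p.1 q.1).Nonempty) :
    covariance (ind H P δ p) (ind H P δ q) (contModel (Fin n) ψ) = 0 := by
  classical
  have hd : Disjoint (img H p.1) (img H q.1) := by
    rw [Finset.disjoint_left]
    intro f h1 h2
    refine h ⟨f, ?_, ?_⟩
    · simpa [mem_img] using h1
    · simpa [mem_img] using h2
  have hI : iIndepFun (fun (f : Sym2 (Fin n)) (ω : Sym2 (Fin n) → LabelSpace) => ω f)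
      (contModel (Fin n) ψ) :=
    iIndepFun_pi (X := fun (_ : Sym2 (Fin n)) (x : LabelSpace) => x)
      (fun f => measurable_id.aemeasurable)
  have hI2 := hI.indepFun_finset (img H p.1) (img H q.1) hd (fun f => measurable_pi_apply f)
  have key : ∀ p : (VH → Fin n) × (Sym2 VH → ℕ), ind H P δ p =
      (ind H P δ p ∘ fill (img H p.1)) ∘
        (fun (ω : Sym2 (Fin n) → LabelSpace) (f : img H p.1) => ω f) := by
    intro p
    funext ω
    have e : ∀ f ∈ img H p.1, ω f =
        fill (img H p.1) (fun f : img H p.1 => ω f) f := by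
      intro f hf
      simp [fill, hf]
    have : ω ∈ occ H P δ p.1 p.2 ↔
        fill (img H p.1) (fun f : img H p.1 => ω f) ∈ occ H P δ p.1 p.2 :=
      ⟨occ_congr H P hP δ _ _ _ _ e, occ_congr H P hP δ _ _ _ _ fun f hf => (e f hf).symm⟩
    simp only [ind, Function.comp_apply, Set.indicator_apply, this, Pi.one_apply]
  have hI3 : IndepFun (ind H P δ p) (ind H P δ q) (contModel (Fin n) ψ) := by
    rw [key p, key q]
    exact hI2.comp ((measurable_ind H P δ p).comp (measurable_fill _))
      ((measurable_ind H P δ q).comp (measurable_fill _))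
  exact hI3.covariance_eq_zero (memLp_ind H P δ ψ p) (memLp_ind H P δ ψ q)

/-- Second-moment upper bound for almost surely bounded label
multiplicity distributions. -/
theorem statement15 {VH : Type} [Fintype VH] [DecidableEq VH] (H : SimpleGraph VH)
    (hH : 1 ≤ H.edgeSet.ncard)
    (P : Sym2 VH → Sym2 VH → Prop) (hP : StrictPartialOrderOn H.edgeSet P)
    (ψ : Measure ℕ) (hψ : IsLMD ψ) (hbounded : ∃ C : ℕ, ψ {k | C < k} = 0)
    (δ : ℝ) (hδ : 0 < δ) (hδ1 : δ < 1) (n : ℕ) :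
    variance (fun ω => ((motifOcc H P δ ω).ncard : ℝ)) (contModel (Fin n) ψ)
      ≤ δ ^ (2 * H.edgeSet.ncard) * lmdMean ψ ^ (2 * H.edgeSet.ncard)
        * (1 + H.edgeSet.ncard * (1 - δ) / δ) ^ 2
        * ∑ᶠ p ∈ {p : (VH → Fin n) × (VH → Fin n) |
            Function.Injective p.1 ∧ Function.Injective p.2 ∧
              (sharedEdges H p.1 p.2).Nonempty},
            ((δ * lmdSq ψ + lmdMean ψ - δ * lmdMean ψ) / (δ * lmdMean ψ ^ 2))
              ^ (sharedEdges H p.1 p.2).ncard := by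
  classical
  obtain ⟨C, hC⟩ := hbounded
  have := hψ.1
  set T : Finset (Sym2 VH → ℕ) :=
    Fintype.piFinset (fun e => if e ∈ H.edgeSet then Finset.range C else {0}) with hTdef
  set Φ : Finset (VH → Fin n) := Finset.univ.filter Function.Injective with hΦ
  have hTmem : ∀ τ, τ ∈ T ↔ (∀ e, e ∉ H.edgeSet → τ e = 0) ∧ ∀ e ∈ H.edgeSet, τ e < C := by
    intro τ
    rw [hTdef, Fintype.mem_piFinset]
    constructor
    · intro h
      refine ⟨fun e he => ?_, fun e he => ?_⟩
      · simpa [he] using h e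
      · simpa [he] using h e
    · rintro ⟨h1, h2⟩ e
      by_cases he : e ∈ H.edgeSet
      · simpa [he] using h2 e he
      · simpa [he] using h1 e he
  set μ := contModel (Fin n) ψ with hμ
  have hae : (fun ω => ((motifOcc H P δ ω).ncard : ℝ)) =ᵐ[μ]
      fun ω => ∑ p ∈ Φ ×ˢ T, ind H P δ p ω := by
    filter_upwards [ae_bounded (n := n) ψ C hC] with ω hω
    have hset : motifOcc H P δ ω =
        ↑((Φ ×ˢ T).filter (fun p => ω ∈ occ H P δ p.1 p.2)) := by
      ext p
      simp only [Finset.coe_filter, Finset.mem_product, hTmem, hΦ, Finset.mem_filter,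
        Finset.mem_univ, true_and, motifOcc, occ, Set.mem_ofPred_eq]
      constructor
      · rintro ⟨a, b, c, d, e⟩
        exact ⟨⟨a, b, fun e he => (c e he).trans_le (hω _)⟩, c, d, e⟩
      · rintro ⟨⟨a, b, -⟩, c, d, e⟩
        exact ⟨a, b, c, d, e⟩
    rw [hset, Set.ncard_coe_finset, Finset.card_filter]
    push_cast
    refine Finset.sum_congr rfl fun p _ => ?_
    simp [ind, Set.indicator_apply]
  rw [variance_congr hae, variance_fun_sum' (fun p _ => memLp_ind H P δ ψ p)]
  set K := δ ^ (2 * H.edgeSet.ncard) * lmdMean ψ ^ (2 * H.edgeSet.ncard)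
        * (1 + H.edgeSet.ncard * (1 - δ) / δ) ^ 2 with hK
  have hsupp : {p : (VH → Fin n) × (VH → Fin n) |
            Function.Injective p.1 ∧ Function.Injective p.2 ∧
              (sharedEdges H p.1 p.2).Nonempty} =
      ↑((Φ ×ˢ Φ).filter (fun p => (sharedEdges H p.1 p.2).Nonempty)) := by
    ext p
    simp [hΦ, and_assoc]
  rw [hsupp, finsum_mem_coe_finset, Finset.mul_sum, Finset.sum_filter]
  have hre : ∑ p ∈ Φ ×ˢ T, ∑ q ∈ Φ ×ˢ T, covariance (ind H P δ p) (ind H P δ q) μ =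
      ∑ y ∈ Φ ×ˢ Φ, ∑ x ∈ T ×ˢ T,
        covariance (ind H P δ (y.1, x.1)) (ind H P δ (y.2, x.2)) μ := by
    simp only [Finset.sum_product]
    refine Finset.sum_congr rfl fun a _ => ?_
    rw [Finset.sum_comm]
  refine (le_of_eq hre).trans (Finset.sum_le_sum fun y hy => ?_)
  obtain ⟨hy1, hy2⟩ := Finset.mem_product.1 hy
  have i1 : Function.Injective y.1 := (Finset.mem_filter.1 hy1).2
  have i2 : Function.Injective y.2 := (Finset.mem_filter.1 hy2).2
  split_ifs with hsh
  · refine (Finset.sum_le_sum fun x _ => cov_le H P δ ψ (y.1, x.1) (y.2, x.2)).trans ?_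
    exact pair_sum H P ψ hψ δ hδ hδ1 C T (fun τ hτ => (hTmem τ).1 hτ) y.1 y.2 i1 i2
  · exact le_of_eq (Finset.sum_eq_zero fun x _ => cov_zero H P hP δ ψ (y.1, x.1) (y.2, x.2) hsh)

end RTG
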